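/- Let S be a finite set, A a finite action set, R: S × A → [0,1] a bounded reward function, τ_a(·|s) probability distributions on S, and γ ∈ (0,1). Define T_K: 𝔐 → 𝔐 on 1-bounded pseudometrics by T_K(m)(x,y) = max_{a ∈ A} [ (1-γ)|R(x,a) - R(y,a)| + γ W₁(m)(τ_a(·|x), τ_a(·|y)) ], where W₁(m) is the Kantorovich (1-Wasserstein) distance induced by m. Then T_K is a γ-contraction with respect to Δ(m₁,m₂) = sup_{x,y}|m₁(x,y) - m₂(x,y)|, and hence has a unique fixed point in 𝔐. -/

import Mathlib

open Finset

/-- `m` is a 1-bounded pseudometric on `S`. -/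
def IsBddPseudometric {S : Type*} (m : S → S → ℝ) : Prop :=
  (∀ x y, 0 ≤ m x y) ∧ (∀ x y, m x y ≤ 1) ∧ (∀ x, m x x = 0) ∧
    (∀ x y, m x y = m y x) ∧ (∀ x y z, m x z ≤ m x y + m y z)

/-- `c` is a coupling of the distributions `μ` and `ν` on the finite set `S`. -/
def IsCoupling {S : Type*} [Fintype S] (c : S → S → ℝ) (μ ν : S → ℝ) : Prop :=
  (∀ x y, 0 ≤ c x y) ∧ (∀ x, ∑ y, c x y = μ x) ∧ (∀ y, ∑ x, c x y = ν y)

/-- The Kantorovich (1-Wasserstein) distance induced by a cost `m` between distributions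
`μ` and `ν` on a finite set: the infimum of the expected cost over couplings. -/
noncomputable def kantorovich {S : Type*} [Fintype S] (m : S → S → ℝ) (μ ν : S → ℝ) : ℝ :=
  sInf {v | ∃ c : S → S → ℝ, IsCoupling c μ ν ∧ v = ∑ x, ∑ y, c x y * m x y}

/-- The sup metric `Δ` on functions `S → S → ℝ`. -/
noncomputable def supDist {S : Type*} (m₁ m₂ : S → S → ℝ) : ℝ :=
  ⨆ p : S × S, |m₁ p.1 p.2 - m₂ p.1 p.2|

/-- The operator `T_K` of the bisimulation metric:
`T_K(m)(x,y) = max_a [(1-γ)|R(x,a)-R(y,a)| + γ W₁(m)(τ_a(·|x), τ_a(·|y))]`. -/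
noncomputable def TK {S A : Type*} [Fintype S] [Fintype A] [Nonempty A]
    (R : S → A → ℝ) (τ : A → S → S → ℝ) (γ : ℝ) (m : S → S → ℝ) : S → S → ℝ :=
  fun x y => univ.sup' univ_nonempty
    (fun a => (1 - γ) * |R x a - R y a| + γ * kantorovich m (τ a x) (τ a y))

/-!
A coupling of two probability distributions has total mass one, so `m ↦ W₁(m)(μ, ν)` is
`1`-Lipschitz for the sup metric. Hence `T_K` is a `γ`-contraction of the space of all cost
functions `S → S → ℝ`, and Banach's theorem gives a unique fixed point there. The 1-bounded
pseudometrics form a nonempty closed subset which `T_K` preserves, so the fixed point, being the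
limit of the iterates of `0`, is one of them.

For the invariance, `T_K(m)` is a maximum of convex combinations of the pseudometrics
`|R(x, a) - R(y, a)|` and `W₁(m)(τ_a(·|x), τ_a(·|y))`. The triangle inequality for `W₁(m)` comes
from gluing a coupling of `μ, ν` and a coupling of `ν, ρ` along their common marginal `ν`.
-/

theorem abs_sup'_sub_sup'_le {ι α : Type*} [AddCommGroup α] [LinearOrder α] [IsOrderedAddMonoid α]
    {s : Finset ι} (hs : s.Nonempty) {f g : ι → α} {d : α} (h : ∀ i ∈ s, |f i - g i| ≤ d) :
    |s.sup' hs f - s.sup' hs g| ≤ d := by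
  have sup'_sub_le {u v : ι → α} (huv : ∀ i ∈ s, u i - v i ≤ d) : s.sup' hs u - s.sup' hs v ≤ d :=
    sub_le_iff_le_add.2 <| sup'_le hs u fun i hi =>
      (sub_le_iff_le_add.1 (huv i hi)).trans (add_le_add_right (le_sup' v hi) d)
  exact abs_sub_le_iff.2 ⟨sup'_sub_le fun i hi => (abs_sub_le_iff.1 (h i hi)).1,
    sup'_sub_le fun i hi => (abs_sub_le_iff.1 (h i hi)).2⟩

theorem supDist_eq_dist {S : Type*} [Fintype S] (m₁ m₂ : S → S → ℝ) :
    supDist m₁ m₂ = dist m₁ m₂ := by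
  have hsup : 0 ≤ supDist m₁ m₂ := Real.iSup_nonneg fun _ => abs_nonneg _
  refine le_antisymm (Real.iSup_le (fun p => ?_) dist_nonneg)
    ((dist_pi_le_iff hsup).2 fun x => (dist_pi_le_iff hsup).2 fun y => ?_)
  · exact (dist_le_pi_dist (m₁ p.1) (m₂ p.1) p.2).trans (dist_le_pi_dist m₁ m₂ p.1)
  · exact le_ciSup (f := fun p : S × S => |m₁ p.1 p.2 - m₂ p.1 p.2|)
      (Set.finite_range _).bddAbove (x, y)

namespace IsBddPseudometric

variable {S : Type*}

theorem zero : IsBddPseudometric (0 : S → S → ℝ) := by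
  simp [IsBddPseudometric]

theorem abs_sub {f : S → ℝ} (hf : ∀ x y, |f x - f y| ≤ 1) :
    IsBddPseudometric fun x y => |f x - f y| :=
  ⟨fun _ _ => abs_nonneg _, hf, fun x => by simp, fun x y => abs_sub_comm (f x) (f y),
    fun x y z => abs_sub_le (f x) (f y) (f z)⟩

theorem finset_sup' {ι : Type*} {s : Finset ι} (hs : s.Nonempty) {m : ι → S → S → ℝ}
    (hm : ∀ i ∈ s, IsBddPseudometric (m i)) :
    IsBddPseudometric fun x y => s.sup' hs fun i => m i x y := by
  have le_sup {i : ι} (hi : i ∈ s) (x y : S) : m i x y ≤ s.sup' hs fun j => m j x y :=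
    le_sup' (fun j => m j x y) hi
  refine ⟨fun x y => ?_, fun x y => ?_, fun x => ?_, fun x y => ?_, fun x y z => ?_⟩
  · obtain ⟨i, hi⟩ := hs
    exact ((hm i hi).1 x y).trans (le_sup hi x y)
  · exact sup'_le hs _ fun i hi => (hm i hi).2.1 x y
  · exact sup'_eq_of_forall hs _ fun i hi => (hm i hi).2.2.1 x
  · exact sup'_congr hs rfl fun i hi => (hm i hi).2.2.2.1 x y
  · exact sup'_le hs _ fun i hi =>
      ((hm i hi).2.2.2.2 x y z).trans (add_le_add (le_sup hi x y) (le_sup hi y z))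

end IsBddPseudometric

theorem convex_setOf_isBddPseudometric {S : Type*} :
    Convex ℝ {m : S → S → ℝ | IsBddPseudometric m} := by
  rintro m ⟨m_nonneg, m_le_one, m_self, m_comm, m_triangle⟩
    n ⟨n_nonneg, n_le_one, n_self, n_comm, n_triangle⟩ a b ha hb hab
  refine ⟨fun x y => ?_, fun x y => ?_, fun x => ?_, fun x y => ?_, fun x y z => ?_⟩ <;>
    simp only [Pi.add_apply, Pi.smul_apply, smul_eq_mul]
  · exact add_nonneg (mul_nonneg ha (m_nonneg x y)) (mul_nonneg hb (n_nonneg x y))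
  · calc a * m x y + b * n x y ≤ a * 1 + b * 1 := by
          gcongr
          exacts [m_le_one x y, n_le_one x y]
      _ = 1 := by rw [mul_one, mul_one, hab]
  · rw [m_self, n_self, mul_zero, mul_zero, add_zero]
  · rw [m_comm, n_comm]
  · calc a * m x z + b * n x z ≤ a * (m x y + m y z) + b * (n x y + n y z) := by
          gcongr
          exacts [m_triangle x y z, n_triangle x y z]
      _ = a * m x y + b * n x y + (a * m y z + b * n y z) := by ring

theorem isClosed_setOf_isBddPseudometric {S : Type*} :
    IsClosed {m : S → S → ℝ | IsBddPseudometric m} := by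
  have continuous_eval (x y : S) : Continuous fun m : S → S → ℝ => m x y := by fun_prop
  simp only [IsBddPseudometric, Set.ofPred_and, Set.ofPred_forall]
  refine .inter ?_ (.inter ?_ (.inter ?_ (.inter ?_ ?_)))
  · exact isClosed_iInter fun x => isClosed_iInter fun y =>
      isClosed_le continuous_const (continuous_eval x y)
  · exact isClosed_iInter fun x => isClosed_iInter fun y =>
      isClosed_le (continuous_eval x y) continuous_const
  · exact isClosed_iInter fun x => isClosed_eq (continuous_eval x x) continuous_const
  · exact isClosed_iInter fun x => isClosed_iInter fun y =>
      isClosed_eq (continuous_eval x y) (continuous_eval y x)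
  · exact isClosed_iInter fun x => isClosed_iInter fun y => isClosed_iInter fun z =>
      isClosed_le (continuous_eval x z) ((continuous_eval x y).add (continuous_eval y z))

section Coupling

variable {S : Type*} [Fintype S] {c e : S → S → ℝ} {μ ν ρ : S → ℝ}

theorem isCoupling_mul (hμ : μ ∈ stdSimplex ℝ S) (hν : ν ∈ stdSimplex ℝ S) :
    IsCoupling (fun x y => μ x * ν y) μ ν :=
  ⟨fun x y => mul_nonneg (hμ.1 x) (hν.1 y), fun x => by rw [← mul_sum, hν.2, mul_one],
    fun y => by rw [← sum_mul, hμ.2, one_mul]⟩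

theorem isCoupling_diagonal [DecidableEq S] (hμ : ∀ x, 0 ≤ μ x) :
    IsCoupling (Matrix.diagonal μ) μ μ := by
  refine ⟨fun x y => ?_, fun x => by simp [Matrix.diagonal_apply],
    fun y => by simp [Matrix.diagonal_apply]⟩
  rw [Matrix.diagonal_apply]
  split_ifs
  exacts [hμ x, le_rfl]

namespace IsCoupling

theorem swap (hc : IsCoupling c μ ν) : IsCoupling (fun y x => c x y) ν μ :=
  ⟨fun y x => hc.1 x y, hc.2.2, hc.2.1⟩

theorem le_left (hc : IsCoupling c μ ν) (x y : S) : c x y ≤ μ x :=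
  hc.2.1 x ▸ single_le_sum (fun z _ => hc.1 x z) (mem_univ y)

theorem le_right (hc : IsCoupling c μ ν) (x y : S) : c x y ≤ ν y :=
  hc.swap.le_left y x

theorem right_nonneg (hc : IsCoupling c μ ν) (y : S) : 0 ≤ ν y :=
  (hc.1 y y).trans (hc.le_right y y)

theorem sum_mul_const (hc : IsCoupling c μ ν) (hμ : ∑ x, μ x = 1) (d : ℝ) :
    ∑ x, ∑ y, c x y * d = d := by
  simp only [← sum_mul, hc.2.1, hμ, one_mul]

end IsCoupling

/-- The gluing of a coupling `c` of `μ, ν` and a coupling `e` of `ν, ρ`: the joint law of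
`(x, y, z)` in which `x` and `z` are conditionally independent given `y`. Its `(x, z)`-marginal is
the coupling used in the triangle inequality for `kantorovich`. Where `ν y = 0` both couplings
vanish, so the value `0` given by division by zero is the right one. -/
noncomputable def gluing (c e : S → S → ℝ) (ν : S → ℝ) (x y z : S) : ℝ :=
  c x y * e y z / ν y

theorem gluing_nonneg (hc : IsCoupling c μ ν) (he : IsCoupling e ν ρ) (x y z : S) :
    0 ≤ gluing c e ν x y z :=
  div_nonneg (mul_nonneg (hc.1 x y) (he.1 y z)) (hc.right_nonneg y)

theorem sum_gluing_right (hc : IsCoupling c μ ν) (he : IsCoupling e ν ρ) (x y : S) :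
    ∑ z, gluing c e ν x y z = c x y := by
  simp only [gluing]
  rw [← sum_div, ← mul_sum, he.2.1]
  exact mul_div_cancel_of_imp fun h => le_antisymm (h ▸ hc.le_right x y) (hc.1 x y)

theorem sum_gluing_left (hc : IsCoupling c μ ν) (he : IsCoupling e ν ρ) (y z : S) :
    ∑ x, gluing c e ν x y z = e y z := by
  simp only [gluing]
  rw [← sum_div, ← sum_mul, hc.2.2]
  exact mul_div_cancel_left_of_imp fun h => le_antisymm (h ▸ he.le_left y z) (he.1 y z)

theorem isCoupling_sum_gluing (hc : IsCoupling c μ ν) (he : IsCoupling e ν ρ) :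
    IsCoupling (fun x z => ∑ y, gluing c e ν x y z) μ ρ := by
  refine ⟨fun x z => sum_nonneg fun y _ => gluing_nonneg hc he x y z, fun x => ?_, fun z => ?_⟩
  · rw [sum_comm]
    simp only [sum_gluing_right hc he, hc.2.1]
  · rw [sum_comm]
    simp only [sum_gluing_left hc he, he.2.2]

theorem sum_gluing_mul_add (hc : IsCoupling c μ ν) (he : IsCoupling e ν ρ) (m n : S → S → ℝ) :
    ∑ x, ∑ z, ∑ y, gluing c e ν x y z * (m x y + n y z) =
      ∑ x, ∑ y, c x y * m x y + ∑ y, ∑ z, e y z * n y z := by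
  simp only [mul_add, sum_add_distrib]
  congr 1
  · refine sum_congr rfl fun x _ => ?_
    rw [sum_comm]
    simp only [← sum_mul, sum_gluing_right hc he]
  · calc ∑ x, ∑ z, ∑ y, gluing c e ν x y z * n y z
        = ∑ z, ∑ y, ∑ x, gluing c e ν x y z * n y z := by
          rw [sum_comm]
          exact sum_congr rfl fun z _ => sum_comm
      _ = ∑ y, ∑ z, e y z * n y z := by
          simp only [← sum_mul, sum_gluing_left hc he]
          exact sum_comm

end Coupling

section Kantorovich

variable {S : Type*} [Fintype S] {m c : S → S → ℝ} {μ ν ρ : S → ℝ}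

theorem kantorovich_le_of_isCoupling (m : S → S → ℝ) (hc : IsCoupling c μ ν) :
    kantorovich m μ ν ≤ ∑ x, ∑ y, c x y * m x y := by
  refine csInf_le ⟨∑ x, ∑ y, -(μ x * |m x y|), ?_⟩ ⟨c, hc, rfl⟩
  rintro _ ⟨c', hc', rfl⟩
  refine sum_le_sum fun x _ => sum_le_sum fun y _ => neg_le_of_abs_le ?_
  rw [abs_mul, abs_of_nonneg (hc'.1 x y)]
  exact mul_le_mul_of_nonneg_right (hc'.le_left x y) (abs_nonneg _)

theorem le_kantorovich (hμν : ∃ c, IsCoupling c μ ν) {b : ℝ}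
    (h : ∀ c, IsCoupling c μ ν → b ≤ ∑ x, ∑ y, c x y * m x y) : b ≤ kantorovich m μ ν := by
  obtain ⟨c, hc⟩ := hμν
  refine le_csInf ⟨_, c, hc, rfl⟩ ?_
  rintro _ ⟨c', hc', rfl⟩
  exact h c' hc'

theorem kantorovich_nonneg (hm : ∀ x y, 0 ≤ m x y) (μ ν : S → ℝ) : 0 ≤ kantorovich m μ ν := by
  refine Real.sInf_nonneg ?_
  rintro _ ⟨c, hc, rfl⟩
  exact sum_nonneg fun x _ => sum_nonneg fun y _ => mul_nonneg (hc.1 x y) (hm x y)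

theorem kantorovich_le_of_forall_le (hμ : μ ∈ stdSimplex ℝ S) (hν : ν ∈ stdSimplex ℝ S) {d : ℝ}
    (hm : ∀ x y, m x y ≤ d) : kantorovich m μ ν ≤ d := by
  have hc := isCoupling_mul hμ hν
  calc kantorovich m μ ν ≤ ∑ x, ∑ y, μ x * ν y * m x y := kantorovich_le_of_isCoupling m hc
    _ ≤ ∑ x, ∑ y, μ x * ν y * d := sum_le_sum fun x _ => sum_le_sum fun y _ =>
        mul_le_mul_of_nonneg_left (hm x y) (hc.1 x y)
    _ = d := hc.sum_mul_const hμ.2 d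

theorem kantorovich_self (hm : ∀ x y, 0 ≤ m x y) (hm_self : ∀ x, m x x = 0)
    (hμ : ∀ x, 0 ≤ μ x) : kantorovich m μ μ = 0 := by
  classical
  refine le_antisymm ?_ (kantorovich_nonneg hm μ μ)
  calc kantorovich m μ μ ≤ ∑ x, ∑ y, Matrix.diagonal μ x y * m x y :=
        kantorovich_le_of_isCoupling m (isCoupling_diagonal hμ)
    _ = 0 := by simp [Matrix.diagonal_apply, hm_self]

theorem kantorovich_swap (m : S → S → ℝ) (μ ν : S → ℝ) :
    kantorovich (fun y x => m x y) ν μ = kantorovich m μ ν := by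
  unfold kantorovich
  congr 1
  ext v
  refine (Equiv.piComm fun _ _ : S => ℝ).exists_congr fun c =>
    and_congr ⟨IsCoupling.swap, IsCoupling.swap⟩ ?_
  rw [sum_comm]
  rfl

theorem kantorovich_triangle (hm : ∀ x y z, m x z ≤ m x y + m y z)
    (hμν : ∃ c, IsCoupling c μ ν) (hνρ : ∃ e, IsCoupling e ν ρ) :
    kantorovich m μ ρ ≤ kantorovich m μ ν + kantorovich m ν ρ := by
  rw [← sub_le_iff_le_add]
  refine le_kantorovich hμν fun c hc => ?_
  rw [sub_le_comm]
  refine le_kantorovich hνρ fun e he => ?_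
  rw [sub_le_iff_le_add']
  calc kantorovich m μ ρ ≤ ∑ x, ∑ z, (∑ y, gluing c e ν x y z) * m x z :=
        kantorovich_le_of_isCoupling m (isCoupling_sum_gluing hc he)
    _ = ∑ x, ∑ z, ∑ y, gluing c e ν x y z * m x z := by simp only [sum_mul]
    _ ≤ ∑ x, ∑ z, ∑ y, gluing c e ν x y z * (m x y + m y z) :=
        sum_le_sum fun x _ => sum_le_sum fun z _ => sum_le_sum fun y _ =>
          mul_le_mul_of_nonneg_left (hm x y z) (gluing_nonneg hc he x y z)
    _ = ∑ x, ∑ y, c x y * m x y + ∑ y, ∑ z, e y z * m y z := sum_gluing_mul_add hc he m m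

theorem lipschitzWith_kantorovich (hμ : μ ∈ stdSimplex ℝ S) (hν : ν ∈ stdSimplex ℝ S) :
    LipschitzWith 1 fun m : S → S → ℝ => kantorovich m μ ν := by
  refine LipschitzWith.of_le_add fun m n => ?_
  rw [← sub_le_iff_le_add]
  refine le_kantorovich ⟨_, isCoupling_mul hμ hν⟩ fun c hc => ?_
  rw [sub_le_iff_le_add]
  have le_add_dist (x y : S) : m x y ≤ n x y + dist m n :=
    sub_le_iff_le_add'.1 <| (Real.sub_le_dist _ _).trans <|
      (dist_le_pi_dist (m x) (n x) y).trans (dist_le_pi_dist m n x)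
  calc kantorovich m μ ν ≤ ∑ x, ∑ y, c x y * m x y := kantorovich_le_of_isCoupling m hc
    _ ≤ ∑ x, ∑ y, c x y * (n x y + dist m n) := sum_le_sum fun x _ => sum_le_sum fun y _ =>
        mul_le_mul_of_nonneg_left (le_add_dist x y) (hc.1 x y)
    _ = ∑ x, ∑ y, c x y * n x y + dist m n := by
        simp only [mul_add, sum_add_distrib, hc.sum_mul_const hμ.2]

theorem IsBddPseudometric.kantorovich_kernel {T : Type*} (hm : IsBddPseudometric m)
    {κ : T → S → ℝ} (hκ : ∀ t, κ t ∈ stdSimplex ℝ S) :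
    IsBddPseudometric fun s t => kantorovich m (κ s) (κ t) := by
  obtain ⟨m_nonneg, m_le_one, m_self, m_comm, m_triangle⟩ := hm
  refine ⟨fun s t => kantorovich_nonneg m_nonneg _ _,
    fun s t => kantorovich_le_of_forall_le (hκ s) (hκ t) m_le_one,
    fun t => kantorovich_self m_nonneg m_self (hκ t).1, fun s t => ?_,
    fun s t u => kantorovich_triangle m_triangle ⟨_, isCoupling_mul (hκ s) (hκ t)⟩
      ⟨_, isCoupling_mul (hκ t) (hκ u)⟩⟩
  have m_swap : (fun y x => m x y) = m := funext₂ fun y x => m_comm x y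
  simpa only [m_swap] using kantorovich_swap m (κ t) (κ s)

end Kantorovich

section BisimulationOperator

variable {S A : Type*} [Fintype S] [Fintype A] [Nonempty A] {τ : A → S → S → ℝ} {γ : ℝ}

theorem IsBddPseudometric.TK {R : S → A → ℝ} (hR : ∀ a x y, |R x a - R y a| ≤ 1)
    (hτ : ∀ a s, τ a s ∈ stdSimplex ℝ S) (hγ₀ : 0 ≤ γ) (hγ₁ : γ ≤ 1) {m : S → S → ℝ}
    (hm : IsBddPseudometric m) : IsBddPseudometric (TK R τ γ m) :=
  .finset_sup' univ_nonempty fun a _ =>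
    convex_setOf_isBddPseudometric (.abs_sub (hR a)) (hm.kantorovich_kernel (hτ a))
      (sub_nonneg.2 hγ₁) hγ₀ (sub_add_cancel 1 γ)

theorem dist_TK_le (R : S → A → ℝ) (hτ : ∀ a s, τ a s ∈ stdSimplex ℝ S) (hγ : 0 ≤ γ)
    (m₁ m₂ : S → S → ℝ) : dist (TK R τ γ m₁) (TK R τ γ m₂) ≤ γ * dist m₁ m₂ := by
  have hdist : 0 ≤ γ * dist m₁ m₂ := mul_nonneg hγ dist_nonneg
  refine (dist_pi_le_iff hdist).2 fun x => (dist_pi_le_iff hdist).2 fun y =>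
    abs_sup'_sub_sup'_le univ_nonempty fun a _ => ?_
  rw [add_sub_add_left_eq_sub, ← mul_sub, abs_mul, abs_of_nonneg hγ, ← Real.dist_eq]
  gcongr
  simpa using (lipschitzWith_kantorovich (hτ a x) (hτ a y)).dist_le_mul m₁ m₂

theorem contractingWith_TK (R : S → A → ℝ) (hτ : ∀ a s, τ a s ∈ stdSimplex ℝ S) (hγ₀ : 0 ≤ γ)
    (hγ₁ : γ < 1) : ContractingWith γ.toNNReal (TK R τ γ) :=
  ⟨Real.toNNReal_lt_one.2 hγ₁, .of_dist_le_mul fun m₁ m₂ => by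
    simpa only [Real.coe_toNNReal γ hγ₀] using dist_TK_le R hτ hγ₀ m₁ m₂⟩

end BisimulationOperator

theorem stmt_9_general {S A : Type*} [Fintype S] [Fintype A] [Nonempty A]
    (R : S → A → ℝ) (hR : ∀ a x y, |R x a - R y a| ≤ 1)
    (τ : A → S → S → ℝ) (hτ : ∀ a s, τ a s ∈ stdSimplex ℝ S)
    (γ : ℝ) (hγ₀ : 0 ≤ γ) (hγ₁ : γ < 1) :
    (∀ m₁ m₂ : S → S → ℝ, supDist (TK R τ γ m₁) (TK R τ γ m₂) ≤ γ * supDist m₁ m₂) ∧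
      ∃ m : S → S → ℝ, IsBddPseudometric m ∧ TK R τ γ m = m ∧ ∀ n, TK R τ γ n = n → n = m := by
  have hT := contractingWith_TK R hτ hγ₀ hγ₁
  refine ⟨fun m₁ m₂ => ?_, hT.fixedPoint, ?_, hT.fixedPoint_isFixedPt,
    fun n hn => hT.fixedPoint_unique hn⟩
  · simpa only [supDist_eq_dist] using dist_TK_le R hτ hγ₀ m₁ m₂
  · have mapsTo_TK : Set.MapsTo (TK R τ γ) {m | IsBddPseudometric m} {m | IsBddPseudometric m} :=
      fun _ hm => IsBddPseudometric.TK hR hτ hγ₀ hγ₁.le hm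
    exact isClosed_setOf_isBddPseudometric.mem_of_tendsto (hT.tendsto_iterate_fixedPoint 0)
      (.of_forall fun k => mapsTo_TK.iterate k IsBddPseudometric.zero)

/-- The operator `T_K` is a `γ`-contraction on the space of 1-bounded pseudometrics with
the sup metric `Δ`, and hence has a unique fixed point (the bisimulation metric). -/
theorem stmt_9
    {S A : Type*} [Fintype S] [Fintype A] [Nonempty S] [Nonempty A]
    (R : S → A → ℝ) (hR : ∀ s a, 0 ≤ R s a ∧ R s a ≤ 1)
    (τ : A → S → S → ℝ)
    (hτpos : ∀ a s s', 0 ≤ τ a s s') (hτsum : ∀ a s, ∑ s', τ a s s' = 1)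
    (γ : ℝ) (hγ0 : 0 < γ) (hγ1 : γ < 1) :
    (∀ m₁ m₂ : S → S → ℝ, IsBddPseudometric m₁ → IsBddPseudometric m₂ →
        supDist (TK R τ γ m₁) (TK R τ γ m₂) ≤ γ * supDist m₁ m₂)
      ∧ ∃! m : S → S → ℝ, IsBddPseudometric m ∧ TK R τ γ m = m := by
  obtain ⟨hT, m, hm, hfix, huniq⟩ := stmt_9_general R (fun a x y => abs_sub_le_of_nonneg_of_le
    (hR x a).1 (hR x a).2 (hR y a).1 (hR y a).2) τ (fun a s => ⟨hτpos a s, hτsum a s⟩) γ hγ0.le hγ1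
  exact ⟨fun m₁ m₂ _ _ => hT m₁ m₂, m, ⟨hm, hfix⟩, fun n hn => huniq n hn.2⟩
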